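/- Let $F$ be a finite field with $q$ elements, let $t \geq 1$, let $k \leq t-1$, let $x_1, \dots, x_k$ be pairwise distinct nonzero elements of $F$, let $y_1, \dots, y_k$ be arbitrary elements of $F$, and let $D' \in F$ be any candidate secret. Then the number of polynomials $p \in F[X]$ of degree at most $t-1$ with constant term $p(0) = D'$ and $p(x_i) = y_i$ for all $i = 1, \dots, k$ is exactly $q^{t-1-k}$; in particular this number is the same for every candidate secret $D'$. -/

import Mathlib

/-!
Adjoining the node `0` with value `D'` to the shares turns the conditions on `p` into interpolation
conditions at `k + 1` distinct nodes. They say that the remainder of `p` modulo the monic nodal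
polynomial `N` of degree `k + 1` is the Lagrange interpolant `L`, so that the solutions are the
`L + N * g` with `g` an arbitrary polynomial of degree less than `t - 1 - k`.
-/

open Polynomial Lagrange Cardinal

section Semiring

variable {R : Type*} [Semiring R]

theorem cardinalMk_degreeLT (m : ℕ) : #(degreeLT R m) = #R ^ m := by
  simpa using (degreeLTEquiv R m).toEquiv.cardinal_eq

theorem monic_mul_mem_degreeLT_iff {N : R[X]} (hN : N.Monic) {m : ℕ} {g : R[X]} :
    N * g ∈ degreeLT R (N.natDegree + m) ↔ g ∈ degreeLT R m := by
  nontriviality R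
  rw [mem_degreeLT, mem_degreeLT, hN.degree_mul_comm, hN.degree_mul, add_comm,
    degree_eq_natDegree hN.ne_zero, Nat.cast_add,
    WithBot.add_lt_add_iff_left (WithBot.natCast_ne_bot _)]

end Semiring

section Ring

variable {R : Type*} [Ring R]

theorem setOf_mem_degreeLT_modByMonic_eq {N r : R[X]} (hN : N.Monic) (hr : r.degree < N.degree)
    (m : ℕ) :
    {p | p ∈ degreeLT R (N.natDegree + m) ∧ p %ₘ N = r} =
      (fun g ↦ r + N * g) '' (degreeLT R m : Set R[X]) := by
  have hr_mem : r ∈ degreeLT R (N.natDegree + m) :=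
    mem_degreeLT.2 <| (hr.trans_le degree_le_natDegree).trans_le <|
      Nat.cast_le.2 (Nat.le_add_right _ _)
  have mem_iff (g : R[X]) : r + N * g ∈ degreeLT R (N.natDegree + m) ↔ g ∈ degreeLT R m :=
    (Submodule.add_mem_iff_right _ hr_mem).trans (monic_mul_mem_degreeLT_iff hN)
  ext p
  constructor
  · rintro ⟨hp, rfl⟩
    have hdiv := modByMonic_add_div p N
    exact ⟨p /ₘ N, (mem_iff _).1 (hdiv.symm ▸ hp), hdiv⟩
  · rintro ⟨g, hg, rfl⟩
    exact ⟨(mem_iff g).2 hg, (div_modByMonic_unique g r hN ⟨rfl, hr⟩).2⟩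

theorem cardinalMk_setOf_mem_degreeLT_modByMonic_eq {N r : R[X]} (hN : N.Monic)
    (hr : r.degree < N.degree) (m : ℕ) :
    #{p | p ∈ degreeLT R (N.natDegree + m) ∧ p %ₘ N = r} = #R ^ m := by
  have h_inj : Function.Injective fun g ↦ r + N * g :=
    (add_right_injective r).comp hN.isRegular.left
  rw [setOf_mem_degreeLT_modByMonic_eq hN hr, mk_image_eq h_inj]
  exact cardinalMk_degreeLT m

end Ring

section Interpolation

variable {F ι : Type*} [Field F]

theorem modByMonic_nodal_eq_interpolate_iff [DecidableEq ι] {s : Finset ι} {v r : ι → F}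
    (hv : Set.InjOn v s) {p : F[X]} :
    p %ₘ nodal s v = interpolate s v r ↔ ∀ i ∈ s, p.eval (v i) = r i := by
  have h_degree : (p %ₘ nodal s v).degree < s.card :=
    (degree_modByMonic_lt p nodal_monic).trans_eq degree_nodal
  have h_eval : ∀ i ∈ s, (p %ₘ nodal s v).eval (v i) = p.eval (v i) := fun i hi ↦ by
    simpa only [coe_aeval_eq_eval] using
      aeval_modByMonic_eq_self_of_root (p := p) (eval_nodal_at_node hi)
  rw [← eq_interpolate_iff r hv, and_iff_right h_degree]
  exact forall₂_congr fun i hi ↦ by rw [h_eval i hi]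

theorem cardinalMk_setOf_mem_degreeLT_eval_eq {s : Finset ι} {v : ι → F} (hv : Set.InjOn v s)
    (r : ι → F) (m : ℕ) :
    #{p : F[X] | p ∈ degreeLT F (s.card + m) ∧ ∀ i ∈ s, p.eval (v i) = r i} = #F ^ m := by
  classical
  have h_degree : (interpolate s v r).degree < (nodal s v).degree :=
    (degree_interpolate_lt r hv).trans_eq degree_nodal.symm
  simpa only [modByMonic_nodal_eq_interpolate_iff hv, natDegree_nodal] using
    cardinalMk_setOf_mem_degreeLT_modByMonic_eq nodal_monic h_degree m

theorem shamir_perfect_secrecy_count_general [Fintype ι] {d : ℕ} (hd : Fintype.card ι ≤ d)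
    {x : ι → F} (hx : Function.Injective x) (hx0 : ∀ i, x i ≠ 0) (y : ι → F) (D' : F) :
    #{p : F[X] | p.degree ≤ d ∧ p.eval 0 = D' ∧ ∀ i, p.eval (x i) = y i} =
      #F ^ (d - Fintype.card ι) := by
  let node : Option ι → F := fun o ↦ o.elim 0 x
  let value : Option ι → F := fun o ↦ o.elim D' y
  have h_node : Function.Injective node :=
    Option.injective_iff.2 ⟨hx, fun ⟨i, hi⟩ ↦ hx0 i hi⟩
  have h_card : (Finset.univ : Finset (Option ι)).card + (d - Fintype.card ι) = d + 1 := by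
    rw [Finset.card_univ, Fintype.card_option]
    omega
  simpa only [h_card, degreeLT_succ_eq_degreeLE, mem_degreeLE, Finset.mem_univ, true_imp_iff,
    Option.forall, node, value, Option.elim_none, Option.elim_some] using
    cardinalMk_setOf_mem_degreeLT_eval_eq (s := .univ) h_node.injOn value (d - Fintype.card ι)

end Interpolation

/-- Perfect secrecy form of the paper's Theorem 1: over a finite field with `q`
elements, for any `k ≤ t-1` shares at pairwise distinct nonzero abscissae and any
candidate secret `D'`, the number of polynomials of degree at most `t-1` with constant
term `D'` consistent with the shares is exactly `q^(t-1-k)`, independently of `D'`. -/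
theorem shamir_perfect_secrecy_count {F : Type*} [Field F] [Fintype F]
    (t k : ℕ) (ht : 1 ≤ t) (hk : k ≤ t - 1)
    (x : Fin k → F) (hx : Function.Injective x) (hx0 : ∀ i, x i ≠ 0)
    (y : Fin k → F) (D' : F) :
    {p : Polynomial F |
        p.degree ≤ ((t - 1 : ℕ) : WithBot ℕ) ∧ p.eval 0 = D' ∧
          ∀ i, p.eval (x i) = y i}.ncard
      = Fintype.card F ^ (t - 1 - k) := by
  have h_card := shamir_perfect_secrecy_count_general ((Fintype.card_fin k).trans_le hk) hx hx0 y D'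
  simpa [← Nat.card_coe_set_eq, Nat.card] using congrArg Cardinal.toNat h_card
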